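/- arXiv:2005.00772 — 2 statements merged into one kernel-verified Lean document; each statement's English description precedes it below -/
import Mathlib

section
/- For all natural numbers n and λ, the double integral ∫₀¹∫₀¹ (xy)^{λ−1/2} (x−y)^n √((1−x)(1−y)) dx dy equals (π² · λ! · χ(n even) / (4^{1+n+2λ} · (2+n)_λ)) · binom(2λ, λ) · binom(n, ⌊n/2⌋) · C_{λ+⌊n/2⌋}. -/
/-- Real Pochhammer symbol: `(x)_0 = 1`, `(x)_n = x(x+1)⋯(x+n-1)`. -/
def poch (x : ℝ) (n : ℕ) : ℝ := ∏ i ∈ Finset.range n, (x + i)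

theorem cat_rec (j : ℕ) : (catalan (j+1) : ℝ) = (4*j+2)/(j+2) * catalan j := by
  have h1 := succ_mul_catalan_eq_centralBinom j
  have h2 := succ_mul_catalan_eq_centralBinom (j+1)
  have h3 := Nat.succ_mul_centralBinom_succ j
  rw [← h1, ← h2] at h3
  have h4 : ((j:ℝ)+1) * (((j:ℝ)+1+1) * catalan (j+1)) = 2 * (2*j+1) * ((j+1) * catalan j) := by
    exact_mod_cast h3
  have : (j:ℝ)+1 ≠ 0 := by positivity
  have : (j:ℝ)+2 ≠ 0 := by positivity
  field_simp
  apply mul_left_cancel₀ ‹(j:ℝ)+1 ≠ 0›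
  linarith

set_option maxRecDepth 100000 in
set_option maxHeartbeats 1000000 in
theorem part_sum (L m : ℕ) (K : ℕ) : ∀ l : ℕ, K + l = 2*m →
    ∑ k ∈ Finset.range (K+1),
      (-1:ℝ)^k * (((2*m+2+L)*(2*m+3+L)*(L+m+2)) *
          ((2*m+2).choose k * catalan (L+k) * catalan (L + (2*m+2-k)))
        - (8*(2*m+3)*(2*m+1)*(2*L+2*m+1)) *
          ((2*m).choose k * catalan (L+k) * catalan (L + (2*m-k))))
    = - (-1:ℝ)^K * (2*m).factorial / (K.factorial * (l+1).factorial) *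
       ((-12-56*L-30*L^2-4*L^3-88*m-226*m*L-88*m*L^2-8*m*L^3-212*m^2-284*m^2*L-56*m^2*L^2
          -200*m^3-112*m^3*L-64*m^4)
        + (14+32*L+8*L^2+68*m+96*m*L+16*m*L^2+104*m^2+64*m^2*L+48*m^3) * (K+1)
        + (-2-4*L-8*m-8*m*L-8*m^2)*(K+1)^2) * (4*(L+K)+2) / (L+l+2)
        * catalan (L+K) * catalan (L+l) := by
  induction K with
  | zero =>
    intro l hl
    have hm : (m:ℝ) = l/2 := by
      have : ((0 + l : ℕ):ℝ) = ((2*m:ℕ):ℝ) := by rw [hl]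
      push_cast at this; linarith
    simp only [zero_add] at hl
    simp only [← hl]
    simp only [zero_add, Finset.range_one, Finset.sum_singleton, Nat.sub_zero, Nat.choose_zero_right,
      ← add_assoc, cat_rec, hm, Nat.factorial_succ, Nat.factorial_zero]
    push_cast
    simp only [add_zero]
    have := Nat.factorial_ne_zero l
    field_simp
    ring
  | succ K ih =>
    intro l hl
    rw [Finset.sum_range_succ, ih (l+1) (by omega)]
    have hm : (m:ℝ) = (K+1+l)/2 := by
      have : ((K+1 + l : ℕ):ℝ) = ((2*m:ℕ):ℝ) := by rw [hl]
      push_cast at this; linarith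
    have e1 : ((2*m).choose (K+1) : ℝ) = (2*m).factorial / ((K+1).factorial * l.factorial) := by
      rw [← hl, Nat.cast_add_choose]
    have e2 : ((2*m+2).choose (K+1) : ℝ)
        = (2*m+2)*(2*m+1)*(2*m).factorial / ((K+1).factorial * (l+2).factorial) := by
      rw [show 2*m+2 = (K+1)+(l+2) by omega, Nat.cast_add_choose,
        show (K+1)+(l+2) = 2*m+2 by omega, Nat.factorial_succ, Nat.factorial_succ]
      push_cast; ring
    have e3 : 2*m - (K+1) = l := by omega
    have e4 : 2*m+2 - (K+1) = l+1+1 := by omega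
    rw [e1, e2, e3, e4]
    have := Nat.factorial_ne_zero l
    have := Nat.factorial_ne_zero K
    generalize (Nat.factorial (2*m) : ℝ) = f
    have c1 := cat_rec (L+K)
    have c2 := cat_rec (L+l)
    have c3 := cat_rec (L+l+1)
    have f1 : ((K+1).factorial : ℝ) = (K+1) * K.factorial := by
      rw [Nat.factorial_succ]; push_cast; ring
    have f2 : ((l+1).factorial : ℝ) = (l+1) * l.factorial := by
      rw [Nat.factorial_succ]; push_cast; ring
    have f3 : ((l+2).factorial : ℝ) = (l+2) * ((l+1) * l.factorial) := by
      rw [Nat.factorial_succ, Nat.factorial_succ]; push_cast; ring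
    rw [show L+(l+1+1) = L+l+1+1 by ring, show L+(l+1) = L+l+1 by ring,
      show L+(K+1) = L+K+1 by ring, show l+1+1 = l+2 by ring, f1, f2, f3, c3, c2, c1, hm]
    push_cast
    generalize (catalan (L+K) : ℝ) = a
    generalize (catalan (L+l) : ℝ) = b
    rw [pow_succ (-1:ℝ) K]
    generalize (-1:ℝ)^K = s
    have : (l:ℝ)+1+1 ≠ 0 := by positivity
    field_simp
    ring

theorem S_rec (L m : ℕ) :
    ((2*m+2+L)*(2*m+3+L)*(L+m+2) : ℝ) * ∑ k ∈ Finset.range (2*m+2+1),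
      (-1:ℝ)^k * ((2*m+2).choose k * catalan (L+k) * catalan (L + (2*m+2-k)))
    = (8*(2*m+3)*(2*m+1)*(2*L+2*m+1)) * ∑ k ∈ Finset.range (2*m+1),
      (-1:ℝ)^k * ((2*m).choose k * catalan (L+k) * catalan (L + (2*m-k))) := by
  have h := part_sum L m (2*m) 0 rfl
  rw [← sub_eq_zero, Finset.sum_range_succ, Finset.sum_range_succ, mul_add, mul_add]
  simp only [mul_sub, Finset.sum_sub_distrib] at h
  simp only [Finset.mul_sum]
  have e : ∀ k, ∀ A B C D : ℝ, (-1)^k * (A * (B * C * D)) = A * ((-1)^k * (B * C * D)) := by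
    intros; ring
  simp only [e] at h
  rw [sub_eq_iff_eq_add] at h
  rw [h]
  have e3 : (-1:ℝ)^(2*m) = 1 := by rw [pow_mul]; norm_num
  have e1 : 2*m+2-(2*m+1) = 1 := by omega
  have e2 : (2*m+2).choose (2*m+1) = 2*m+2 := Nat.choose_succ_self_right (2*m+1)
  rw [e1, e2, Nat.sub_self, Nat.choose_self, pow_succ (-1:ℝ) (2*m+1), pow_succ (-1:ℝ) (2*m), e3]
  simp only [← add_assoc, cat_rec, zero_add, Nat.factorial_one]
  push_cast
  have := Nat.factorial_ne_zero (2*m)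
  norm_num
  field_simp
  ring

theorem S_eq (L m : ℕ) :
    ∑ k ∈ Finset.range (2*m+1),
      (-1:ℝ)^k * ((2*m).choose k * catalan (L+k) * catalan (L + (2*m-k)))
    = L.factorial / poch (2 + (2*m:ℕ)) L * (2*L).choose L * (2*m).choose m * catalan (L+m) := by
  have pp : ∀ x : ℝ, 0 < x → ∀ L, 0 < poch x L := fun x hx L =>
    Finset.prod_pos fun i _ => by positivity
  have ps : ∀ x : ℝ, ∀ L, x * poch (x+1) L = poch x L * (x + L) := by
    intro x L
    rw [poch, poch, ← Finset.prod_range_succ, Finset.prod_range_succ']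
    push_cast
    rw [mul_comm, add_zero]
    congr 1
    exact Finset.prod_congr rfl fun i _ => by ring
  induction m with
  | zero =>
    simp
    have h1 := succ_mul_catalan_eq_centralBinom L
    rw [Nat.centralBinom] at h1
    rw [← h1]
    have h2 : poch 2 L = (L+1).factorial := by
      rw [poch]
      clear h1
      induction L with
      | zero => simp
      | succ L ih => rw [Finset.prod_range_succ, ih, Nat.factorial_succ (L+1)]; push_cast; ring
    rw [h2, Nat.factorial_succ]
    have := Nat.factorial_ne_zero L
    push_cast
    field_simp
    simp
  | succ m ih =>
    have h := S_rec L m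
    rw [ih] at h
    have hA : ((2*m+2+L)*(2*m+3+L)*(L+m+2) : ℝ) ≠ 0 := by positivity
    apply mul_left_cancel₀ hA
    rw [show 2*(m+1) = 2*m+2 by ring, h]
    have h1 := ps (2+(2*m:ℕ)) L
    have h2 := ps (2+(2*m:ℕ)+1) L
    have p1 := pp (2+(2*m:ℕ)) (by positivity) L
    have p2 := pp (2+(2*m:ℕ)+1+1) (by positivity) L
    rw [show (2:ℝ)+(2*m+2:ℕ) = 2+(2*m:ℕ)+1+1 by push_cast; ring]
    have h3 : ((2*m+2).choose (m+1) : ℝ) = 2*(2*m+1)/(m+1) * (2*m).choose m := by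
      have := Nat.succ_mul_centralBinom_succ m
      rw [Nat.centralBinom, Nat.centralBinom, show 2*(m+1) = 2*m+2 by ring] at this
      have h : ((m:ℝ)+1) * (2*m+2).choose (m+1) = 2*(2*m+1) * (2*m).choose m := by exact_mod_cast this
      field_simp; linarith
    have h4 : poch (2+(2*m:ℕ)+1+1) L = poch (2+(2*m:ℕ)) L * ((2*m+2+L)*(2*m+3+L)) / ((2*m+2)*(2*m+3)) := by
      push_cast at *
      have a1 : (2+2*m+1:ℝ) ≠ 0 := by positivity
      have a2 : (2+2*m:ℝ) ≠ 0 := by positivity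
      rw [eq_div_iff (by positivity)]
      linear_combination (2+2*m:ℝ) * h2 + (2+2*m+1+L) * h1
    rw [h3, h4, ← add_assoc, cat_rec]
    push_cast at *
    have := p1.ne'
    field_simp
    ring

theorem S_odd (L n : ℕ) (hn : ¬ Even n) :
    ∑ k ∈ Finset.range (n+1),
      (-1:ℝ)^k * (n.choose k * catalan (L+k) * catalan (L + (n-k))) = 0 := by
  have h := Finset.sum_range_reflect (fun k => 
      (-1:ℝ)^k * (n.choose k * catalan (L+k) * catalan (L + (n-k)))) (n+1)
  rw [← sub_eq_zero, ← Finset.sum_sub_distrib] at h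
  have h2 : ∀ k ∈ Finset.range (n+1), 
      (-1:ℝ)^(n+1-1-k) * (n.choose (n+1-1-k) * catalan (L+(n+1-1-k)) * catalan (L + (n-(n+1-1-k))))
      - (-1:ℝ)^k * (n.choose k * catalan (L+k) * catalan (L + (n-k)))
      = (-2) * ((-1:ℝ)^k * (n.choose k * catalan (L+k) * catalan (L + (n-k)))) := by
    intro k hk
    have hk : k ≤ n := by simpa [Nat.lt_succ_iff] using hk
    have hs : (-1:ℝ)^(n-k) = - (-1)^k := by
      have h1 : (-1:ℝ)^(n-k) * (-1)^k = -1 := by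
        rw [← pow_add, Nat.sub_add_cancel hk]
        exact (Nat.not_even_iff_odd.mp hn).neg_one_pow
      rcases neg_one_pow_eq_or ℝ k with h | h <;> rw [h] at h1 ⊢ <;> linarith
    rw [Nat.add_sub_cancel, Nat.sub_sub_self hk, Nat.choose_symm hk, hs]
    ring
  rw [Finset.sum_congr rfl h2, ← Finset.mul_sum] at h
  linarith

open Complex in
theorem moment (m : ℕ) : 
    IntervalIntegrable (fun x : ℝ => x^((m:ℝ)-1/2) * Real.sqrt (1-x)) MeasureTheory.volume 0 1 ∧
    ∫ x in (0:ℝ)..1, x^((m:ℝ)-1/2) * Real.sqrt (1-x) = Real.pi/2 * catalan m / 4^m := by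
  have hu : 0 < (((m:ℝ)+1/2 : ℝ) : ℂ).re := by rw [ofReal_re]; positivity
  have hv : 0 < (((3/2 : ℝ)) : ℂ).re := by rw [ofReal_re]; positivity
  have hc := betaIntegral_convergent hu hv
  have hg := betaIntegral_eq_Gamma_mul_div _ _ hu hv
  have key : ∀ x ∈ Set.uIcc (0:ℝ) 1, 
     (x:ℂ)^((((m:ℝ)+1/2 : ℝ) : ℂ)-1) * (1-(x:ℂ))^(((3/2 : ℝ) : ℂ)-1)
      = ((x^((m:ℝ)-1/2) * Real.sqrt (1-x) : ℝ) : ℂ) := by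
    intro x hx
    rw [Set.uIcc_of_le zero_le_one] at hx
    rw [ofReal_mul, ofReal_cpow hx.1, Real.sqrt_eq_rpow, ofReal_cpow (by linarith [hx.2])]
    push_cast
    congr 2 <;> ring
  constructor
  · have h2 : IntervalIntegrable (fun x:ℝ => ((x^((m:ℝ)-1/2) * Real.sqrt (1-x) : ℝ) : ℂ)) MeasureTheory.volume 0 1 := by
      refine hc.congr ?_
      intro x hx
      exact key x (Set.uIoc_subset_uIcc hx)
    have := h2.1.re
    refine ⟨?_, by simp⟩
    rw [MeasureTheory.IntegrableOn]
    simpa using this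
  · rw [betaIntegral, intervalIntegral.integral_congr key, intervalIntegral.integral_ofReal,
      ← ofReal_add, Gamma_ofReal, Gamma_ofReal, Gamma_ofReal, ← ofReal_mul, ← ofReal_div] at hg
    rw [ofReal_injective hg]
    have g1 : Real.Gamma (3/2) = Real.sqrt Real.pi / 2 := by
      rw [show (3/2:ℝ) = 1/2+1 by norm_num, Real.Gamma_add_one (by norm_num), Real.Gamma_one_half_eq]; ring
    have hpi := Real.mul_self_sqrt Real.pi_pos.le
    rw [g1]
    clear * - hpi
    induction m with
    | zero =>
      norm_num [Real.Gamma_one_half_eq, Real.Gamma_two]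
      linarith
    | succ m ih =>
      have hG : Real.Gamma (m+1/2+3/2) ≠ 0 := (Real.Gamma_pos_of_pos (by positivity)).ne'
      push_cast
      rw [show (m:ℝ)+1+1/2 = (m+1/2)+1 by ring, Real.Gamma_add_one (by positivity),
        show (m:ℝ)+1/2+1+3/2 = (m+1/2+3/2)+1 by ring, Real.Gamma_add_one (by positivity), cat_rec]
      have : ∀ a b c d e : ℝ, (a*b*c)/(d*e) = a/d*(b*c/e) := by intros; rw [div_mul_div_comm, mul_assoc]
      rw [this, ih]
      have : (m:ℝ)+1/2+3/2 = m+2 := by ring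
      rw [this]
      field_simp
      ring

theorem stmt_16 (n lam : ℕ) :
    ∫ x in (0 : ℝ)..1, ∫ y in (0 : ℝ)..1,
        (x * y) ^ ((lam : ℝ) - 1 / 2) * (x - y) ^ n * Real.sqrt ((1 - x) * (1 - y))
      = (Real.pi ^ 2 * (lam.factorial : ℝ) * (if Even n then 1 else 0) /
            ((4 : ℝ) ^ (1 + n + 2 * lam) * poch (2 + (n : ℝ)) lam))
          * ((2 * lam).choose lam : ℝ) * (n.choose (n / 2) : ℝ)
          * (catalan (lam + n / 2) : ℝ) := by
  set g : ℕ → ℝ → ℝ := fun k x => x ^ k * (x^((lam:ℝ)-1/2) * Real.sqrt (1-x)) with hg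
  have hint : ∀ k, IntervalIntegrable (g k) MeasureTheory.volume 0 1 := by
    intro k
    exact (moment lam).1.continuousOn_mul (by fun_prop)
  have hval : ∀ k, ∫ x in (0:ℝ)..1, g k x = Real.pi/2 * catalan (lam+k) / 4^(lam+k) := by
    intro k
    rw [← (moment (lam+k)).2]
    apply intervalIntegral.integral_congr_ae
    refine Filter.Eventually.of_forall fun x hx => ?_
    rw [Set.uIoc_of_le zero_le_one] at hx
    simp only [hg]
    rw [← mul_assoc, ← Real.rpow_natCast, ← Real.rpow_add hx.1]
    congr 2
    push_cast; ring
  have hexp : ∀ x ∈ Set.uIcc (0:ℝ) 1, ∀ y ∈ Set.uIcc (0:ℝ) 1,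
      (x * y) ^ ((lam : ℝ) - 1 / 2) * (x - y) ^ n * Real.sqrt ((1 - x) * (1 - y))
      = ∑ k ∈ Finset.range (n+1), ((-1)^k * n.choose k * g (n-k) x) * g k y := by
    intro x hx y hy
    rw [Set.uIcc_of_le zero_le_one] at hx hy
    rw [Real.mul_rpow hx.1 hy.1, Real.sqrt_mul (by linarith [hx.2]), show x - y = -y + x by ring, add_pow,
      Finset.mul_sum, Finset.sum_mul]
    refine Finset.sum_congr rfl fun k _ => ?_
    simp only [hg]
    rw [neg_pow]
    ring
  have hin : ∀ x ∈ Set.uIcc (0:ℝ) 1, (∫ y in (0 : ℝ)..1,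
        (x * y) ^ ((lam : ℝ) - 1 / 2) * (x - y) ^ n * Real.sqrt ((1 - x) * (1 - y)))
      = ∑ k ∈ Finset.range (n+1), ((-1)^k * n.choose k * (Real.pi/2 * catalan (lam+k) / 4^(lam+k))) * g (n-k) x := by
    intro x hx
    rw [intervalIntegral.integral_congr (hexp x hx), intervalIntegral.integral_finsetSum]
    · refine Finset.sum_congr rfl fun k _ => ?_
      rw [intervalIntegral.integral_const_mul, hval]
      ring
    · intro k _
      exact (hint k).const_mul _
  rw [intervalIntegral.integral_congr hin, intervalIntegral.integral_finsetSum
    (fun k _ => (hint _).const_mul _)]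
  have hsum : ∑ k ∈ Finset.range (n+1), (∫ x in (0:ℝ)..1,
      ((-1)^k * n.choose k * (Real.pi/2 * catalan (lam+k) / 4^(lam+k))) * g (n-k) x)
      = Real.pi^2 / 4^(1+n+2*lam) * ∑ k ∈ Finset.range (n+1),
        (-1:ℝ)^k * (n.choose k * catalan (lam+k) * catalan (lam + (n-k))) := by
    rw [Finset.mul_sum]
    refine Finset.sum_congr rfl fun k hk => ?_
    have hk : k ≤ n := by simpa [Nat.lt_succ_iff] using hk
    rw [intervalIntegral.integral_const_mul, hval,
      show 1+n+2*lam = 1 + (lam+k) + (lam+(n-k)) by omega, pow_add _ (1+(lam+k)), pow_add _ 1]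
    field_simp
    norm_num
    ring
  rw [hsum]
  by_cases he : Even n
  · obtain ⟨m, rfl⟩ := he.two_dvd
    rw [S_eq, if_pos he, Nat.mul_div_cancel_left m two_pos]
    field_simp
  · rw [S_odd _ _ he, if_neg he]
    simp
end

section
/- For all natural numbers n and λ, the double integral ∫₀¹∫₀¹ (xy)^{λ−1/2} (x−y)^n √((1−y)/(1−x)) dx dy equals (π² · λ! / (2^{1+2n+4λ} · (2+n)_λ)) · binom(2λ, λ) · binom(n, ⌊n/2⌋) · binom(n+2λ, λ+⌊n/2⌋). -/
section helpers
open Finset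

/-- central binomial coefficient as a real -/
noncomputable def ccf (m : ℕ) : ℝ := ((2 * m).factorial : ℝ) / (m.factorial : ℝ) ^ 2

noncomputable def catf (m : ℕ) : ℝ := ccf m / (m + 1)

lemma ccf_succ (m : ℕ) : ((m : ℝ) + 1) * ccf (m + 1) = 2 * (2 * m + 1) * ccf m := by
  unfold ccf
  have h : (m.factorial : ℝ) ≠ 0 := by positivity
  rw [show 2 * (m + 1) = 2 * m + 1 + 1 by ring]
  simp only [Nat.factorial_succ]
  push_cast
  field_simp
  ring

lemma catf_succ (m : ℕ) : ((m : ℝ) + 2) * catf (m + 1) = 2 * (2 * m + 1) * catf m := by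
  have := ccf_succ m
  unfold catf
  have h2 : (m : ℝ) + 1 + 1 ≠ 0 := by positivity
  push_cast
  field_simp
  linear_combination (m + 2 : ℝ) * this

lemma catf_eq (m : ℕ) : catf m = 2 * ccf m - ccf (m + 1) / 2 := by
  have := ccf_succ m
  unfold catf
  field_simp
  linear_combination this

noncomputable def U (f : ℕ → ℝ) (n l : ℕ) : ℝ :=
  ∑ j ∈ range (n + 1), (-1) ^ j * (n.choose j : ℝ) * f (l + j) * f (l + (n - j))

lemma U_rec (f : ℕ → ℝ) (e : ℝ)
    (hf : ∀ m : ℕ, ((m : ℝ) + e) * f (m + 1) = 2 * (2 * m + 1) * f m) (n l : ℕ) :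
    (2 * l + 1) * (l + n + 1 + e) * U f (n + 2) l
      = 2 * (n - 1 + 2 * e) * (n + 1) * U f n (l + 1) := by
  set N := n + 2 with hN
  let t : ℕ → ℝ := fun j => (-1) ^ j * (N.choose j : ℝ) * f (l + j) * f (l + (N - j))
  let G : ℕ → ℝ := fun j =>
    (j : ℝ) * (l + j + e - 1) * (2 * l + 2 * (N - j) + 1) * t j
  have tel : ∀ j ∈ range (N + 1),
      ((N : ℝ) * (2 * l + 1) * (l + n + 1 + e) + 2 * (n - 1 + 2 * e) * (j * (N - j))) * t j
        = G j - G (j + 1) := by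
    intro j hj
    have hj' : j ≤ N := by simpa [Nat.lt_succ_iff] using hj
    have key : G (j + 1) = - ((N : ℝ) - j) * (2 * l + 2 * j + 1) * (l + N - j + e - 1) * t j := by
      rcases hj'.eq_or_lt with h | h
      · subst h
        simp [G, t]
      · obtain ⟨k, hk⟩ := Nat.exists_eq_add_of_lt h
        have h1 : N - j = k + 1 := by omega
        have h2 : N - (j + 1) = k := by omega
        have hch : ((j : ℝ) + 1) * (N.choose (j + 1) : ℝ) = N.choose j * (k + 1) := by
          have := Nat.choose_succ_right_eq N j
          rw [h1] at this
          have h3 : ((N.choose (j + 1) * (j + 1) : ℕ) : ℝ) = (N.choose j * (k + 1) : ℕ) := by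
            rw [this]
          push_cast at h3
          linarith
        have hNr : (N : ℝ) = j + k + 1 := by exact_mod_cast hk
        simp only [G, t, h1, h2]
        have f1 := hf (l + j)
        have f2 := hf (l + k)
        rw [show l + (j + 1) = l + j + 1 by ring, show l + (k + 1) = l + k + 1 by ring]
        push_cast at f1 f2 ⊢
        rw [hNr, pow_succ]
        linear_combination (-1 : ℝ) ^ j * (-((l + j + e) * (2 * l + 2 * k + 1) * f (l + j + 1) * f (l + k))) * hch
          - (-1 : ℝ) ^ j * N.choose j * (k + 1) * (2 * l + 2 * k + 1) * f (l + k) * f1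
          + (-1 : ℝ) ^ j * N.choose j * (k + 1) * (2 * l + 2 * j + 1) * f (l + j) * f2
    rw [key]
    simp only [G]
    have : (N : ℝ) = n + 2 := by simp [hN]
    rw [this]
    ring
  have g0 : G 0 = 0 := by simp [G]
  have g1 : G (N + 1) = 0 := by simp [G, t]
  have s2 : ∑ j ∈ range (N + 1), ((j : ℝ) * (N - j)) * t j
      = - ((n + 2) * (n + 1)) * U f n (l + 1) := by
    rw [hN, sum_range_succ, sum_range_succ']
    simp only [U, mul_sum]
    push_cast
    simp only [sub_self, mul_zero, zero_mul, add_zero]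
    refine sum_congr rfl fun j hj => ?_
    have hj' : j ≤ n := by simpa [Nat.lt_succ_iff] using hj
    simp only [t, N]
    have h1 : l + (n + 2 - (j + 1)) = l + 1 + (n - j) := by omega
    rw [h1, show l + (j + 1) = l + 1 + j by ring]
    have hch : ((j : ℝ) + 1) * (n + 1 - j) * ((n + 2).choose (j + 1) : ℝ)
        = (n + 2) * (n + 1) * n.choose j := by
      have a1 := Nat.add_one_mul_choose_eq (n + 1) j
      have a2 := Nat.choose_mul_succ_eq n j
      have a1' : (((n + 1 + 1) * (n + 1).choose j : ℕ) : ℝ) = ((n + 1 + 1).choose (j + 1) * (j + 1) : ℕ) := by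
        rw [a1]
      have a2' : ((n.choose j * (n + 1) : ℕ) : ℝ) = ((n + 1).choose j * (n + 1 - j) : ℕ) := by
        rw [a2]
      push_cast [Nat.cast_sub (show j ≤ n + 1 by omega)] at a1' a2'
      rw [show n + 2 = n + 1 + 1 by ring]
      linear_combination -(n + 1 - j : ℝ) * a1' - (n + 2 : ℝ) * a2'
    rw [pow_succ]
    linear_combination -(-1 : ℝ) ^ j * f (l + 1 + j) * f (l + 1 + (n - j)) * hch
  have s3 : ∑ j ∈ range (N + 1), t j = U f N l := rfl
  have s4 : ∑ j ∈ range (N + 1), 2 * ((n : ℝ) - 1 + 2 * e) * (j * (N - j)) * t j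
     = 2 * ((n : ℝ) - 1 + 2 * e) * (- ((n + 2) * (n + 1)) * U f n (l + 1)) := by
    rw [← s2, mul_sum]
    exact sum_congr rfl fun j _ => by ring
  have s5 : (N : ℝ) * (2 * l + 1) * (l + n + 1 + e) * U f N l
      + 2 * ((n : ℝ) - 1 + 2 * e) * (- ((n + 2) * (n + 1)) * U f n (l + 1)) = 0 := by
    rw [← s4, ← s3, mul_sum, ← sum_add_distrib]
    rw [← sub_self (0 : ℝ)]
    nth_rewrite 1 [← g0]
    rw [← g1, ← sum_range_sub']
    refine sum_congr rfl fun j hj => ?_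
    rw [← tel j hj]
    ring
  have hNr : (N : ℝ) = n + 2 := by simp [hN]
  rw [hNr] at s5
  have hn2 : (n : ℝ) + 2 ≠ 0 := by positivity
  apply mul_left_cancel₀ hn2
  linear_combination s5

lemma D_closed (m l : ℕ) : U ccf (2 * m) l =
    (l.factorial * (2 * m).factorial : ℝ) / (2 * m + l).factorial * ccf l * ccf m * ccf (m + l) := by
  induction m generalizing l with
  | zero =>
    have : (l.factorial : ℝ) ≠ 0 := by positivity
    simp [U, ccf]
    field_simp
    simp
  | succ m ih =>
    have h := U_rec ccf 1 ccf_succ (2 * m) l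
    rw [ih] at h
    have h1 := ccf_succ l
    have h2 := ccf_succ m
    rw [show 2 * (m + 1) = 2 * m + 2 by ring]
    have hp : ((2 * l + 1) * (l + 2 * m + 2) : ℝ) ≠ 0 := by positivity
    have e1 : ccf (l + 1) = 2 * (2 * l + 1) * ccf l / (l + 1) := by
      field_simp; linear_combination h1
    have e2 : ccf (m + 1) = 2 * (2 * m + 1) * ccf m / (m + 1) := by
      field_simp; linear_combination h2
    apply mul_left_cancel₀ hp
    rw [e1, show m + (l + 1) = m + 1 + l by ring, show 2 * m + (l + 1) = 2 * m + l + 1 by ring] at h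
    rw [e2, show 2 * m + 2 + l = 2 * m + l + 1 + 1 by ring]
    have : ((2 * m + l).factorial : ℝ) ≠ 0 := by positivity
    simp only [Nat.factorial_succ] at h ⊢
    push_cast at h ⊢
    have : (2 * m + l + 1 + 1 : ℝ) ≠ 0 := by positivity
    rw [show ((2 * l + 1) * (l + 2 * m + 2) : ℝ) = (2 * l + 1) * (l + 2 * m + 1 + 1) by ring, h]
    field_simp
    ring

lemma P_closed (m l : ℕ) : U catf (2 * m) l =
    (l.factorial * (2 * m + 1).factorial : ℝ) / (2 * m + 1 + l).factorial * ccf l * ccf m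
      * ccf (m + l) / (m + l + 1) := by
  induction m generalizing l with
  | zero =>
    have : (l.factorial : ℝ) ≠ 0 := by positivity
    simp [U, catf, ccf, add_comm 1 l, Nat.factorial_succ]
    field_simp
  | succ m ih =>
    have h := U_rec catf 2 (by simpa using catf_succ) (2 * m) l
    rw [ih] at h
    have h1 := ccf_succ l
    have h2 := ccf_succ m
    rw [show 2 * (m + 1) = 2 * m + 2 by ring]
    have hp : ((2 * l + 1) * (l + 2 * m + 3) : ℝ) ≠ 0 := by positivity
    have e1 : ccf (l + 1) = 2 * (2 * l + 1) * ccf l / (l + 1) := by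
      field_simp; linear_combination h1
    have e2 : ccf (m + 1) = 2 * (2 * m + 1) * ccf m / (m + 1) := by
      field_simp; linear_combination h2
    apply mul_left_cancel₀ hp
    rw [e1, show m + (l + 1) = m + 1 + l by ring, show 2 * m + 1 + (l + 1) = 2 * m + l + 1 + 1 by ring] at h
    rw [e2, show 2 * m + 2 + 1 + l = 2 * m + l + 1 + 1 + 1 by ring]
    have : ((2 * m + l).factorial : ℝ) ≠ 0 := by positivity
    simp only [Nat.factorial_succ] at h ⊢
    push_cast at h ⊢
    have : (2 * m + l + 1 + 1 + 1 : ℝ) ≠ 0 := by positivity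
    have : (m + l + 1 + 1 : ℝ) ≠ 0 := by positivity
    have : (m + 1 + l + 1 : ℝ) ≠ 0 := by positivity
    rw [show ((2 * l + 1) * (l + 2 * m + 3) : ℝ) = (2 * l + 1) * (l + 2 * m + 1 + 2) by ring, h]
    field_simp
    ring

noncomputable def S (n l : ℕ) : ℝ :=
  ∑ j ∈ range (n + 1), (-1) ^ j * (n.choose j : ℝ) * catf (l + j) * ccf (l + (n - j))

lemma refl_sum (f g : ℕ → ℝ) (n l : ℕ) :
   ∑ j ∈ range (n + 1), (-1) ^ j * (n.choose j : ℝ) * f (l + j) * g (l + (n - j))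
    = (-1) ^ n * ∑ j ∈ range (n + 1), (-1) ^ j * (n.choose j : ℝ) * g (l + j) * f (l + (n - j)) := by
  rw [← sum_range_reflect, mul_sum]
  refine sum_congr rfl fun j hj => ?_
  have hj' : j ≤ n := by simpa [Nat.lt_succ_iff] using hj
  rw [show n + 1 - 1 - j = n - j by omega, Nat.choose_symm hj', show n - (n - j) = j by omega]
  have : (-1 : ℝ) ^ (n - j) = (-1) ^ n * (-1) ^ j := by
    obtain ⟨k, rfl⟩ := Nat.exists_eq_add_of_le hj'
    rw [Nat.add_sub_cancel_left, pow_add]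
    have : ((-1 : ℝ) ^ j) * (-1) ^ j = 1 := by rw [← mul_pow]; simp
    linear_combination -(-1 : ℝ) ^ k * this
  rw [this]; ring

lemma S_even (m l : ℕ) : S (2 * m) l = (l + m + 1) * U catf (2 * m) l := by
  have h := refl_sum catf ccf (2 * m) l
  have h2 : S (2 * m) l + S (2 * m) l = 2 * ((l + m + 1) * U catf (2 * m) l) := by
    nth_rewrite 2 [S]
    rw [h]
    simp only [S, U, pow_mul, neg_one_sq, one_pow, one_mul, ← sum_add_distrib, mul_sum]
    refine sum_congr rfl fun j hj => ?_
    have hj' : j ≤ 2 * m := by simpa [Nat.lt_succ_iff] using hj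
    have e : ((2 * m - j : ℕ) : ℝ) = 2 * m - j := by push_cast [Nat.cast_sub hj']; ring
    have e1 : ∀ k : ℕ, ccf k = (k + 1) * catf k := fun k => by unfold catf; field_simp
    rw [e1, e1 (l + j)]
    push_cast
    rw [e]
    ring
  linarith

lemma S_odd_s17 (m l : ℕ) : 4 * S (2 * m + 1) l = U ccf (2 * m + 2) l := by
  set n := 2 * m + 1 with hn
  have hs : (-1 : ℝ) ^ n = -1 := by rw [hn, pow_succ, pow_mul]; simp
  have d0 : U ccf n l = 0 := by
    have := refl_sum ccf ccf n l
    rw [hs] at this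
    change U ccf n l = -1 * U ccf n l at this
    linarith
  let E := ∑ j ∈ range (n + 1), (-1) ^ j * (n.choose j : ℝ) * ccf (l + j + 1) * ccf (l + (n - j))
  let E2 := ∑ j ∈ range (n + 1), (-1) ^ j * (n.choose j : ℝ) * ccf (l + j) * ccf (l + (n - j) + 1)
  have e2 : E = - E2 := by
    have := refl_sum (fun k => ccf (k + 1)) ccf n l
    rw [hs] at this
    simp only [E, E2]
    rw [this]; ring
  have s : S n l = 2 * U ccf n l - E / 2 := by
    simp only [S, U, E, mul_sum, sum_div, ← sum_sub_distrib]
    refine sum_congr rfl fun j hj => ?_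
    rw [catf_eq]; ring
  have u : U ccf (n + 1) l = E2 - E := by
    unfold U
    rw [sum_range_succ']
    have : ∀ j ∈ range (n + 1), (-1 : ℝ) ^ (j + 1) * ((n + 1).choose (j + 1) : ℝ) * ccf (l + (j + 1)) * ccf (l + (n + 1 - (j + 1)))
       = (-1 : ℝ) ^ (j + 1) * (n.choose (j + 1) : ℝ) * ccf (l + (j + 1)) * ccf (l + (n + 1 - (j + 1)))
        - (-1) ^ j * (n.choose j : ℝ) * ccf (l + j + 1) * ccf (l + (n - j)) := by
      intro j _
      rw [Nat.choose_succ_succ, show n + 1 - (j + 1) = n - j by omega, ← add_assoc]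
      push_cast
      ring
    rw [sum_congr rfl this, sum_sub_distrib]
    have h3 : E2 = ∑ j ∈ range (n + 1 + 1), (-1) ^ j * (n.choose j : ℝ) * ccf (l + j) * ccf (l + (n + 1 - j)) := by
      rw [sum_range_succ]
      simp only [Nat.choose_succ_self, Nat.cast_zero, mul_zero, zero_mul, add_zero, E2]
      refine sum_congr rfl fun j hj => ?_
      have hj' : j ≤ n := by simpa [Nat.lt_succ_iff] using hj
      rw [show l + (n + 1 - j) = l + (n - j) + 1 by omega]
    rw [h3, sum_range_succ' _ (n + 1)]
    simp [E]
    ring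
  rw [show 2 * m + 2 = n + 1 by omega, u, s, d0, e2]
  ring

lemma poch_eq (n l : ℕ) : poch (2 + (n : ℝ)) l = ((n + 1 + l).factorial : ℝ) / (n + 1).factorial := by
  induction l with
  | zero =>
    have : ((n + 1).factorial : ℝ) ≠ 0 := by positivity
    simp [poch, this]
  | succ l ih =>
    unfold poch at ih ⊢
    rw [prod_range_succ, ih, ← add_assoc, Nat.factorial_succ (n + 1 + l)]
    push_cast
    ring

lemma choose_ccf (m : ℕ) : ((2 * m).choose m : ℝ) = ccf m := by
  rw [Nat.cast_choose ℝ (show m ≤ 2 * m by omega), show 2 * m - m = m by omega, ccf, sq]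

lemma choose_odd (m : ℕ) : ((2 * m + 1).choose m : ℝ) = ccf (m + 1) / 2 := by
  rw [Nat.cast_choose ℝ (show m ≤ 2 * m + 1 by omega), show 2 * m + 1 - m = m + 1 by omega, ccf,
    show 2 * (m + 1) = 2 * m + 1 + 1 by ring]
  simp only [Nat.factorial_succ]
  have : (m.factorial : ℝ) ≠ 0 := by positivity
  push_cast
  field_simp
  ring

lemma S_closed (n l : ℕ) : S n l = (l.factorial : ℝ) / poch (2 + (n : ℝ)) l
   * ((2 * l).choose l : ℝ) * (n.choose (n / 2) : ℝ) * ((n + 2 * l).choose (l + n / 2) : ℝ) := by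
  rw [poch_eq, choose_ccf]
  have q1 : ((n + 1).factorial : ℝ) ≠ 0 := by positivity
  have q2 : ((n + 1 + l).factorial : ℝ) ≠ 0 := by positivity
  rcases Nat.even_or_odd' n with ⟨m, rfl | rfl⟩
  · rw [S_even, P_closed, show 2 * m / 2 = m by omega, show 2 * m + 2 * l = 2 * (l + m) by ring,
      choose_ccf, choose_ccf, add_comm m l]
    have : (m + l + 1 : ℝ) ≠ 0 := by positivity
    field_simp
    ring
  · have h := S_odd_s17 m l
    rw [show 2 * m + 2 = 2 * (m + 1) by ring, D_closed] at h
    rw [show (2 * m + 1) / 2 = m by omega, show 2 * m + 1 + 2 * l = 2 * (l + m) + 1 by ring,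
      choose_odd, choose_odd, show l + m + 1 = m + 1 + l by ring]
    rw [show 2 * (m + 1) = 2 * m + 1 + 1 by ring] at h
    field_simp
    field_simp at h
    linarith

lemma gamma_half (m : ℕ) : Real.Gamma ((m : ℝ) + 1 / 2)
    = Real.sqrt Real.pi * (2 * m).factorial / (4 ^ m * m.factorial) := by
  induction m with
  | zero =>
    have := Real.Gamma_one_half_eq
    rw [one_div] at this
    simp [this]
  | succ m ih =>
    rw [show ((m + 1 : ℕ) : ℝ) + 1 / 2 = (m + 1 / 2) + 1 by push_cast; ring,
      Real.Gamma_add_one (by positivity), ih, show 2 * (m + 1) = 2 * m + 1 + 1 by ring]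
    simp only [Nat.factorial_succ]
    have : (m.factorial : ℝ) ≠ 0 := by positivity
    push_cast
    field_simp
    ring

lemma beta_aux (u v x : ℝ) (hx : x ∈ Set.Ioo (0 : ℝ) 1) :
    (x : ℂ) ^ ((u : ℂ) - 1) * (1 - (x : ℂ)) ^ ((v : ℂ) - 1)
      = ((x ^ (u - 1) * (1 - x) ^ (v - 1) : ℝ) : ℂ) := by
  have h1 : 0 ≤ x := hx.1.le
  have h2 : 0 ≤ 1 - x := by linarith [hx.2]
  push_cast [Complex.ofReal_cpow h1, Complex.ofReal_cpow h2]
  rfl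

lemma beta_int (u v : ℝ) (hu : 0 < u) (hv : 0 < v) :
    IntervalIntegrable (fun x : ℝ => x ^ (u - 1) * (1 - x) ^ (v - 1)) MeasureTheory.volume 0 1 := by
  have h := Complex.betaIntegral_convergent (u := u) (v := v) (by simpa) (by simpa)
  rw [intervalIntegrable_iff_integrableOn_Ioo_of_le zero_le_one] at h ⊢
  have h' := h.re
  refine h'.congr ?_
  filter_upwards [MeasureTheory.ae_restrict_mem measurableSet_Ioo] with x hx
  rw [beta_aux u v x hx]
  simp

lemma beta_val (u v : ℝ) (hu : 0 < u) (hv : 0 < v) :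
    ∫ x in (0 : ℝ)..1, x ^ (u - 1) * (1 - x) ^ (v - 1)
      = Real.Gamma u * Real.Gamma v / Real.Gamma (u + v) := by
  have h := ProbabilityTheory.beta_eq_betaIntegralReal u v hu hv
  rw [ProbabilityTheory.beta] at h
  rw [h, Complex.betaIntegral]
  rw [intervalIntegral.integral_congr_Ioo_of_le (g := fun x : ℝ => ((x ^ (u - 1) * (1 - x) ^ (v - 1) : ℝ) : ℂ)) zero_le_one
    (fun x hx => beta_aux u v x hx), intervalIntegral.integral_ofReal]
  simp

lemma a_val (m : ℕ) : ∫ x in (0 : ℝ)..1, x ^ (((m : ℝ) + 1 / 2) - 1) * (1 - x) ^ ((1 / 2 : ℝ) - 1)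
    = Real.pi * ccf m / 4 ^ m := by
  rw [beta_val _ _ (by positivity) (by positivity), gamma_half, Real.Gamma_one_half_eq,
    show (m : ℝ) + 1 / 2 + 1 / 2 = m + 1 by ring, Real.Gamma_nat_eq_factorial, ccf]
  have : (m.factorial : ℝ) ≠ 0 := by positivity
  have h := Real.mul_self_sqrt Real.pi_pos.le
  field_simp
  linear_combination h

lemma b_val (m : ℕ) : ∫ x in (0 : ℝ)..1, x ^ (((m : ℝ) + 1 / 2) - 1) * (1 - x) ^ ((3 / 2 : ℝ) - 1)
    = Real.pi * catf m / (2 * 4 ^ m) := by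
  rw [beta_val _ _ (by positivity) (by positivity), gamma_half,
    show (3 / 2 : ℝ) = 1 / 2 + 1 by norm_num, Real.Gamma_add_one (by norm_num),
    Real.Gamma_one_half_eq,
    show (m : ℝ) + 1 / 2 + (1 / 2 + 1) = ((m + 1 : ℕ) : ℝ) + 1 by push_cast; ring,
    Real.Gamma_nat_eq_factorial, catf, ccf, Nat.factorial_succ]
  have : (m.factorial : ℝ) ≠ 0 := by positivity
  have h := Real.mul_self_sqrt Real.pi_pos.le
  push_cast
  field_simp
  linear_combination h

lemma integrand_eq (n l : ℕ) (x y : ℝ) (hx : x ∈ Set.Ioo (0 : ℝ) 1) (hy : y ∈ Set.Ioo (0 : ℝ) 1) :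
    (x * y) ^ ((l : ℝ) - 1 / 2) * (x - y) ^ n * Real.sqrt ((1 - y) / (1 - x))
    = ∑ j ∈ range (n + 1), ((-1) ^ j * (n.choose j : ℝ) *
        (x ^ ((((l + (n - j) : ℕ) : ℝ) + 1 / 2) - 1) * (1 - x) ^ ((1 / 2 : ℝ) - 1))) *
        (y ^ ((((l + j : ℕ) : ℝ) + 1 / 2) - 1) * (1 - y) ^ ((3 / 2 : ℝ) - 1)) := by
  have hx1 : 0 < 1 - x := by linarith [hx.2]
  have hy1 : 0 < 1 - y := by linarith [hy.2]
  rw [Real.mul_rpow hx.1.le hy.1.le, Real.sqrt_div hy1.le, Real.sqrt_eq_rpow, Real.sqrt_eq_rpow,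
    sub_eq_neg_add x y, add_pow, mul_sum, sum_mul]
  refine sum_congr rfl fun j hj => ?_
  have e : ∀ z : ℝ, 0 < z → ∀ k : ℕ, z ^ ((((l + k : ℕ) : ℝ) + 1 / 2) - 1) = z ^ ((l : ℝ) - 1 / 2) * z ^ k := by
    intro z hz k
    rw [← Real.rpow_natCast z k, ← Real.rpow_add hz]
    congr 1
    push_cast; ring
  rw [e x hx.1, e y hy.1, neg_pow, show (1 / 2 : ℝ) - 1 = -(1 / 2) by norm_num, Real.rpow_neg hx1.le,
    show (3 / 2 : ℝ) - 1 = 1 / 2 by norm_num]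
  ring

lemma integral_eq (n l : ℕ) :
    ∫ x in (0 : ℝ)..1, ∫ y in (0 : ℝ)..1,
        (x * y) ^ ((l : ℝ) - 1 / 2) * (x - y) ^ n * Real.sqrt ((1 - y) / (1 - x))
    = ∑ j ∈ range (n + 1), ((-1) ^ j * (n.choose j : ℝ)) * (Real.pi * ccf (l + (n - j)) / 4 ^ (l + (n - j)))
       * (Real.pi * catf (l + j) / (2 * 4 ^ (l + j))) := by
  have inner : ∀ x ∈ Set.Ioo (0 : ℝ) 1, (∫ y in (0 : ℝ)..1,
        (x * y) ^ ((l : ℝ) - 1 / 2) * (x - y) ^ n * Real.sqrt ((1 - y) / (1 - x)))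
      = ∑ j ∈ range (n + 1), ((-1) ^ j * (n.choose j : ℝ) *
        (x ^ ((((l + (n - j) : ℕ) : ℝ) + 1 / 2) - 1) * (1 - x) ^ ((1 / 2 : ℝ) - 1))) *
        (Real.pi * catf (l + j) / (2 * 4 ^ (l + j))) := by
    intro x hx
    rw [intervalIntegral.integral_congr_Ioo_of_le zero_le_one
      (fun y hy => integrand_eq n l x y hx hy), intervalIntegral.integral_finsetSum]
    · refine sum_congr rfl fun j _ => ?_
      rw [intervalIntegral.integral_const_mul, b_val]
    · intro j _
      exact (beta_int _ _ (by positivity) (by positivity)).const_mul _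
  rw [intervalIntegral.integral_congr_Ioo_of_le zero_le_one inner,
    intervalIntegral.integral_finsetSum]
  · refine sum_congr rfl fun j _ => ?_
    rw [intervalIntegral.integral_mul_const, intervalIntegral.integral_const_mul, a_val]
  · intro j _
    exact ((beta_int _ _ (by positivity) (by positivity)).const_mul _).mul_const _

end helpers

/-- Corollary 13: integral formula equivalent to Theorem B. -/
theorem stmt_17 (n lam : ℕ) :
    ∫ x in (0 : ℝ)..1, ∫ y in (0 : ℝ)..1,
        (x * y) ^ ((lam : ℝ) - 1 / 2) * (x - y) ^ n * Real.sqrt ((1 - y) / (1 - x))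
      = (Real.pi ^ 2 * (lam.factorial : ℝ) /
            ((2 : ℝ) ^ (1 + 2 * n + 4 * lam) * poch (2 + (n : ℝ)) lam))
          * ((2 * lam).choose lam : ℝ) * (n.choose (n / 2) : ℝ)
          * ((n + 2 * lam).choose (lam + n / 2) : ℝ) := by
  rw [integral_eq]
  have h : ∀ j ∈ Finset.range (n + 1), ((-1) ^ j * (n.choose j : ℝ)) *
      (Real.pi * ccf (lam + (n - j)) / 4 ^ (lam + (n - j)))
       * (Real.pi * catf (lam + j) / (2 * 4 ^ (lam + j)))
      = (Real.pi ^ 2 / (2 : ℝ) ^ (1 + 2 * n + 4 * lam)) *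
        ((-1) ^ j * (n.choose j : ℝ) * catf (lam + j) * ccf (lam + (n - j))) := by
    intro j hj
    have hj' : j ≤ n := by simpa [Nat.lt_succ_iff] using hj
    have e : (2 : ℝ) ^ (1 + 2 * n + 4 * lam) = 4 ^ (lam + (n - j)) * (2 * 4 ^ (lam + j)) := by
      rw [show (4 : ℝ) = 2 ^ 2 by norm_num, ← pow_mul, ← pow_mul, ← pow_succ', ← pow_add]
      congr 1
      omega
    rw [e]
    field_simp
  rw [Finset.sum_congr rfl h, ← Finset.mul_sum]
  change _ * S n lam = _
  rw [S_closed]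
  have hp : poch (2 + (n : ℝ)) lam ≠ 0 := by
    rw [poch_eq]; positivity
  field_simp
end
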